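/- For every finite abelian p-group A, one has (μ^0(A)/|A|) / (∑_B μ^0(B)/|B|) = μ^1(A), where the sum runs over isomorphism classes of finite abelian p-groups B. (Equivalently: for a random group G chosen according to μ^0 with a uniform random element g ∈ G, conditioned on the event g = 1, the group G is distributed according to μ^1.) -/

import Mathlib

/-!
Cohen–Lenstra moments: for every integer `u ≥ 0` and every finite abelian `p`-group `A`,
the sum over isomorphism classes of finite abelian `p`-groups `B` of `|Sur(B,A)| · μ^u(B)`
equals `|A|^{-u}`.
-/

open scoped Classical

/-- The number of surjective group homomorphisms `B → A`. -/
noncomputable def numSur (B A : Type*) [AddCommGroup B] [AddCommGroup A] : ℕ :=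
  Nat.card {f : B →+ A // Function.Surjective f}

/-- The number of automorphisms of `A`. -/
noncomputable def numAut (A : Type*) [AddCommGroup A] : ℕ :=
  Nat.card (A ≃+ A)

/-- The infinite product `∏_{k=1}^∞ (1 - p^{-(k+u)})`. -/
noncomputable def clProd (p u : ℕ) : ℝ :=
  ∏' k : ℕ, (1 - (p : ℝ) ^ (-((k : ℤ) + 1 + u)))

/-- The Cohen–Lenstra measure `μ^u(A) = |A|^{-u} |Aut(A)|^{-1} ∏_{k=1}^∞ (1 - p^{-(k+u)})`. -/
noncomputable def clMeasure (p u : ℕ) (A : Type*) [AddCommGroup A] : ℝ :=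
  ((Nat.card A : ℝ) ^ u)⁻¹ * ((numAut A : ℝ))⁻¹ * clProd p u

/-- The finite abelian `p`-group `G_λ = ⨁_i ℤ/p^{λ_i}ℤ` associated to a partition `λ`,
a finite multiset of positive integers. -/
def CLGroup (p : ℕ) (lam : Multiset ℕ+) : Type :=
  ∀ i : Fin lam.toList.length, ZMod (p ^ ((lam.toList.get i : ℕ+) : ℕ))

noncomputable instance (p : ℕ) (lam : Multiset ℕ+) : AddCommGroup (CLGroup p lam) := by
  delta CLGroup; infer_instance


/-- glue -/
noncomputable def glueHom {M : Type} [AddCommGroup M] (m : M) (d : ℤ) : M × ℤ →+ M × ℤ where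
  toFun x := (x.1 + x.2 • m, x.2 * d)
  map_zero' := by simp
  map_add' x y := by
    ext
    · simp [add_smul]; abel
    · simp [add_mul]

lemma glueHom_inj {M : Type} [AddCommGroup M] (m : M) (d : ℤ) (hd : d ≠ 0) :
    Function.Injective (glueHom m d) := by
  rintro ⟨a, b⟩ ⟨c, e⟩ h
  simp only [glueHom, AddMonoidHom.coe_mk, ZeroHom.coe_mk, Prod.mk.injEq] at h
  obtain ⟨h1, h2⟩ := h
  have := mul_right_cancel₀ hd h2
  subst this
  simpa using h1

/-- glue -/
noncomputable def glue {M : Type} [AddCommGroup M] (L : AddSubgroup M) (m : M) (d : ℤ) :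
    AddSubgroup (M × ℤ) := (L.comap (AddMonoidHom.fst M ℤ)).map (glueHom m d)

lemma mem_glue {M : Type} [AddCommGroup M] (L : AddSubgroup M) (m : M) (d : ℤ) (x : M × ℤ) :
    x ∈ glue L m d ↔ ∃ c : ℤ, x.2 = c * d ∧ x.1 - c • m ∈ L := by
  obtain ⟨x, z⟩ := x
  simp only [glue, AddSubgroup.mem_map, AddSubgroup.mem_comap, glueHom, AddMonoidHom.coe_mk,
    ZeroHom.coe_mk, Prod.mk.injEq, Prod.exists, AddMonoidHom.coe_fst]
  constructor
  · rintro ⟨a, b, h, rfl, rfl⟩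
    exact ⟨b, rfl, by simpa using h⟩
  · rintro ⟨c, rfl, h⟩
    exact ⟨_, c, h, by simp, rfl⟩

lemma index_glue {M : Type} [AddCommGroup M] (L : AddSubgroup M) (m : M) (d : ℤ) (hd : d ≠ 0) :
    (glue L m d).index = L.index * d.natAbs := by
  have hr : (glueHom m d).range = (AddSubgroup.zmultiples d).comap (AddMonoidHom.snd M ℤ) := by
    ext ⟨x, z⟩
    simp only [AddMonoidHom.mem_range, glueHom, AddMonoidHom.coe_mk, ZeroHom.coe_mk, Prod.mk.injEq,
      Prod.exists, AddSubgroup.mem_comap, AddMonoidHom.coe_snd, AddSubgroup.mem_zmultiples_iff,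
      smul_eq_mul]
    constructor
    · rintro ⟨a, b, -, h⟩; exact ⟨b, h⟩
    · rintro ⟨b, h⟩; exact ⟨x - b • m, b, by simp, h⟩
  have hk : (glueHom m d).ker = ⊥ := (AddMonoidHom.ker_eq_bot_iff _).2 (glueHom_inj m d hd)
  rw [glue, AddSubgroup.index_map, hk, sup_bot_eq, hr,
    AddSubgroup.index_comap_of_surjective _ (fun x => ⟨(x, 0), rfl⟩),
    AddSubgroup.index_comap_of_surjective _ (fun x => ⟨(0, x), rfl⟩), Int.index_zmultiples]

lemma eq_glue {M : Type} [AddCommGroup M] (L : AddSubgroup (M × ℤ)) (m : M) (d : ℤ)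
    (hm : (m, d) ∈ L) (h : L.map (AddMonoidHom.snd M ℤ) = AddSubgroup.zmultiples d) :
    L = glue (L.comap (AddMonoidHom.inl M ℤ)) m d := by
  ext ⟨x, z⟩
  rw [mem_glue]
  simp only [AddSubgroup.mem_comap, AddMonoidHom.inl_apply]
  have key : ∀ c : ℤ, ((x - c • m, 0) : M × ℤ) = (x, c * d) - c • (m, d) := by
    intro c; ext <;> simp
  constructor
  · intro hx
    have : z ∈ L.map (AddMonoidHom.snd M ℤ) := ⟨_, hx, rfl⟩
    rw [h, AddSubgroup.mem_zmultiples_iff] at this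
    obtain ⟨c, rfl⟩ := this
    refine ⟨c, rfl, ?_⟩
    rw [key]
    exact L.sub_mem hx (L.zsmul_mem hm c)
  · rintro ⟨c, rfl, hx⟩
    rw [key] at hx
    simpa using L.add_mem hx (L.zsmul_mem hm c)

/-- p-power index subgroups -/
abbrev PSub (p : ℕ) (M : Type) [AddCommGroup M] := {L : AddSubgroup M // ∃ j : ℕ, L.index = p ^ j}

/-- gluing map -/
noncomputable def glueMap (p : ℕ) (hp : p.Prime) (M : Type) [AddCommGroup M] :
    (Σ L : PSub p M, (M ⧸ L.1) × ℕ) → PSub p (M × ℤ) := fun x =>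
  ⟨glue x.1.1 (Quotient.out x.2.1) ((p ^ x.2.2 : ℕ) : ℤ), by
    obtain ⟨⟨L, j, hj⟩, q, i⟩ := x
    refine ⟨j + i, ?_⟩
    rw [index_glue _ _ _ (by exact_mod_cast pow_ne_zero _ hp.ne_zero)]
    show L.index * ((p ^ i : ℕ) : ℤ).natAbs = _
    rw [hj, Int.natAbs_natCast, pow_add]⟩

lemma glueMap_bij (p : ℕ) (hp : p.Prime) (M : Type) [AddCommGroup M] :
    Function.Bijective (glueMap p hp M) := by
  have hd0 : ∀ i, ((p ^ i : ℕ) : ℤ) ≠ 0 := fun i => by exact_mod_cast pow_ne_zero _ hp.ne_zero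
  constructor
  · rintro ⟨⟨L, hL⟩, q, i⟩ ⟨⟨L', hL'⟩, q', i'⟩ h
    have h0 : glue L (Quotient.out q) ((p ^ i : ℕ) : ℤ) =
      glue L' (Quotient.out q') ((p ^ i' : ℕ) : ℤ) := congrArg Subtype.val h
    have hmem : ∀ x, x ∈ glue L (Quotient.out q) ((p ^ i : ℕ) : ℤ) ↔
      x ∈ glue L' (Quotient.out q') ((p ^ i' : ℕ) : ℤ) := fun x => by rw [h0]
    have hLL : L = L' := by
      ext x
      have := hmem (x, 0)
      rw [mem_glue, mem_glue] at this
      have aux : ∀ (K : AddSubgroup M) (m : M) (j : ℕ),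
          (∃ c : ℤ, ((x, 0) : M × ℤ).2 = c * ((p ^ j : ℕ) : ℤ) ∧ ((x, 0) : M × ℤ).1 - c • m ∈ K)
          ↔ x ∈ K := by
        intro K m j
        constructor
        · rintro ⟨c, h1, h2⟩
          have : c = 0 := by
            rcases mul_eq_zero.1 h1.symm with h | h
            · exact h
            · exact absurd h (hd0 _)
          subst this
          simpa using h2
        · intro h
          exact ⟨0, by simp, by simpa using h⟩
      rwa [aux, aux] at this
    subst hLL
    have hii : i = i' := by
      have h1 := index_glue L (Quotient.out q) _ (hd0 i)
      have h2 := index_glue L (Quotient.out q') _ (hd0 i')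
      rw [h0, h2, Int.natAbs_natCast, Int.natAbs_natCast] at h1
      obtain ⟨j, hj⟩ := hL
      have hne : L.index ≠ 0 := by rw [hj]; exact pow_ne_zero _ hp.ne_zero
      exact (Nat.pow_right_injective hp.two_le (Nat.eq_of_mul_eq_mul_left (Nat.pos_of_ne_zero hne) h1)).symm
    subst hii
    have hqq : q = q' := by
      have h1 : ((Quotient.out q, ((p ^ i : ℕ) : ℤ)) : M × ℤ) ∈
          glue L (Quotient.out q) ((p ^ i : ℕ) : ℤ) := by
        rw [mem_glue]; exact ⟨1, by simp, by simp⟩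
      rw [h0, mem_glue] at h1
      obtain ⟨c, hc, hc'⟩ := h1
      have : c = 1 := by
        have : (1 - c) * ((p ^ i : ℕ) : ℤ) = 0 := by simp only at hc; linarith
        rcases mul_eq_zero.1 this with h | h
        · linarith
        · exact absurd h (hd0 _)
      subst this
      rw [← Quotient.out_eq q, ← Quotient.out_eq q']
      refine Eq.symm ((QuotientAddGroup.eq (s := L)).2 ?_)
      have h3 : Quotient.out q - Quotient.out q' ∈ L := by simpa using hc'
      rwa [sub_eq_neg_add] at h3
    subst hqq
    rfl
  · rintro ⟨L, j, hj⟩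
    obtain ⟨d, hd⟩ := Int.subgroup_cyclic (L.map (AddMonoidHom.snd M ℤ))
    rw [← AddSubgroup.zmultiples_eq_closure] at hd
    have hdvd : (AddSubgroup.zmultiples d).index ∣ p ^ j := by
      rw [← hd, ← hj]
      exact AddSubgroup.index_map_dvd _ (fun x => ⟨(0, x), rfl⟩)
    rw [Int.index_zmultiples] at hdvd
    obtain ⟨i, -, hi⟩ := (Nat.dvd_prime_pow hp).1 hdvd
    have hd' : L.map (AddMonoidHom.snd M ℤ) = AddSubgroup.zmultiples ((p ^ i : ℕ) : ℤ) := by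
      rw [hd, ← hi, Int.zmultiples_natAbs]
    have : ((p ^ i : ℕ) : ℤ) ∈ L.map (AddMonoidHom.snd M ℤ) := by
      rw [hd']; exact AddSubgroup.mem_zmultiples _
    obtain ⟨⟨m, z⟩, hmL, hz⟩ := this
    simp only [AddMonoidHom.coe_snd] at hz
    subst hz
    set L' := L.comap (AddMonoidHom.inl M ℤ) with hL'
    let q : M ⧸ L' := QuotientAddGroup.mk m
    have hq : m - Quotient.out q ∈ L' := by
      have : (QuotientAddGroup.mk (Quotient.out q) : M ⧸ L') = QuotientAddGroup.mk m :=
        Quotient.out_eq q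
      have := (QuotientAddGroup.eq (s := L')).1 this
      rwa [neg_add_eq_sub] at this
    have hmem : (Quotient.out q, ((p ^ i : ℕ) : ℤ)) ∈ L := by
      have h2 : ((m - Quotient.out q, 0) : M × ℤ) ∈ L := hq
      have := L.sub_mem hmL h2
      simpa using this
    have hE := eq_glue L _ _ hmem hd'
    have hind : L'.index ∣ p ^ j := by
      rw [← hj, hE, index_glue _ _ _ (hd0 i)]
      exact dvd_mul_right _ _
    obtain ⟨k, -, hk⟩ := (Nat.dvd_prime_pow hp).1 hind
    refine ⟨⟨⟨L', k, hk⟩, q, i⟩, ?_⟩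
    apply Subtype.ext
    exact hE.symm

open scoped ENNReal

/-- zeta -/
noncomputable def latZ (p : ℕ) (M : Type) [AddCommGroup M] (t : ℕ) : ℝ≥0∞ :=
  ∑' L : PSub p M, ((L.1.index : ℝ≥0∞) ^ t)⁻¹

lemma latZ_prod (p : ℕ) (hp : p.Prime) (M : Type) [AddCommGroup M] (t : ℕ) :
    latZ p (M × ℤ) (t + 1) = latZ p M t * (1 - ((p : ℝ≥0∞)⁻¹) ^ (t + 1))⁻¹ := by
  rw [latZ, ← (Equiv.ofBijective _ (glueMap_bij p hp M)).tsum_eq, ENNReal.tsum_sigma', latZ,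
    ← ENNReal.tsum_mul_right]
  refine tsum_congr fun L => ?_
  rw [ENNReal.tsum_prod', ← ENNReal.tsum_geometric]
  have hne : L.1.index ≠ 0 := by
    obtain ⟨j, hj⟩ := L.2; rw [hj]; exact pow_ne_zero _ hp.ne_zero
  have : ∀ (q : M ⧸ L.1) (i : ℕ), (((((Equiv.ofBijective _ (glueMap_bij p hp M)) ⟨L, q, i⟩).1.index : ℕ) : ℝ≥0∞) ^ (t + 1))⁻¹
      = ((L.1.index : ℝ≥0∞) ^ (t + 1))⁻¹ * ((p : ℝ≥0∞)⁻¹ ^ (t + 1)) ^ i := by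
    intro q i
    have : ((Equiv.ofBijective _ (glueMap_bij p hp M)) ⟨L, q, i⟩).1.index = L.1.index * p ^ i := by
      simp only [Equiv.ofBijective_apply, glueMap]
      rw [index_glue _ _ _ (by exact_mod_cast pow_ne_zero _ hp.ne_zero), Int.natAbs_natCast]
    rw [this]
    push_cast
    rw [mul_pow, ENNReal.mul_inv (Or.inr (by finiteness)) (Or.inl (by finiteness)),
      ← pow_mul, ← pow_mul, ENNReal.inv_pow (a := (p : ℝ≥0∞)), mul_comm i]
  simp only [this]
  simp_rw [ENNReal.tsum_mul_left]
  rw [ENNReal.tsum_const, ← mul_assoc]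
  congr 1
  have : (ENat.card (M ⧸ L.1) : ℝ≥0∞) = L.1.index := by
    have : Finite (M ⧸ L.1) := @AddSubgroup.finite_quotient_of_finiteIndex _ _ _ ⟨hne⟩
    rw [ENat.card_eq_coe_natCard]; rfl
  have h0 : (L.1.index : ℝ≥0∞) ≠ 0 := by exact_mod_cast hne
  rw [this, pow_succ', ENNReal.mul_inv (Or.inl h0) (Or.inl (by finiteness)), mul_right_comm,
    ENNReal.inv_mul_cancel h0 (by finiteness), one_mul]

lemma latZ_congr (p : ℕ) (M N : Type) [AddCommGroup M] [AddCommGroup N] (e : M ≃+ N) (t : ℕ) :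
    latZ p M t = latZ p N t := by
  have hi : ∀ L : AddSubgroup N, (L.comap (e : M →+ N)).index = L.index := fun L =>
    AddSubgroup.index_comap_of_surjective _ e.surjective
  let F : PSub p N → PSub p M := fun L => ⟨L.1.comap (e : M →+ N), by rw [hi]; exact L.2⟩
  have hF : Function.Bijective F := by
    constructor
    · intro L L' h
      exact Subtype.ext (AddSubgroup.comap_injective e.surjective (congrArg Subtype.val h))
    · intro L
      have h1 : (L.1.map (e : M →+ N)).comap (e : M →+ N) = L.1 :=
        AddSubgroup.comap_map_eq_self_of_injective e.injective _
      refine ⟨⟨L.1.map (e : M →+ N), ?_⟩, Subtype.ext h1⟩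
      rw [← hi, h1]; exact L.2
  rw [latZ, latZ, ← (Equiv.ofBijective F hF).tsum_eq]
  refine tsum_congr fun L => ?_
  simp only [Equiv.ofBijective_apply, F, hi]

/-- split -/
def consAdd (n : ℕ) : (Fin (n + 1) → ℤ) ≃+ (Fin n → ℤ) × ℤ where
  toFun v := (Fin.tail v, v 0)
  invFun x := Fin.cons x.2 x.1
  left_inv v := by simp
  right_inv x := by simp
  map_add' v w := rfl

lemma latZ_eq (p : ℕ) (hp : p.Prime) (n : ℕ) :
    latZ p (Fin n → ℤ) (n + 1) = ∏ k ∈ Finset.range n, (1 - ((p : ℝ≥0∞)⁻¹) ^ (k + 2))⁻¹ := by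
  induction n with
  | zero =>
    let u : Unique (PSub p (Fin 0 → ℤ)) :=
      { default := ⟨⊤, 0, by simp⟩
        uniq := fun L => Subtype.ext (Subsingleton.elim _ _) }
    rw [latZ, tsum_eq_single (default : PSub p (Fin 0 → ℤ)) (fun b hb => absurd (Subsingleton.elim _ _) hb)]
    have : (default : PSub p (Fin 0 → ℤ)).1.index = 1 := AddSubgroup.index_top
    rw [this]; simp
  | succ n ih =>
    rw [latZ_congr p _ _ (consAdd n), latZ_prod p hp, ih, Finset.prod_range_succ]

lemma exists_equiv_of_map_eq {α β γ : Type} [Fintype α] [Fintype β] (f : α → γ) (g : β → γ)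
    (h : Finset.univ.val.map f = Finset.univ.val.map g) : ∃ σ : α ≃ β, ∀ a, g (σ a) = f a := by
  have key : ∀ c, Nonempty ({a // f a = c} ≃ {b // g b = c}) := by
    intro c
    rw [← Fintype.card_eq, Fintype.card_subtype, Fintype.card_subtype]
    have := congrArg (Multiset.count c) h
    rw [Multiset.count_map, Multiset.count_map] at this
    simp only [Finset.card_def, Finset.filter_val]
    simpa [eq_comm] using this
  let e := fun c => (key c).some
  refine ⟨(Equiv.sigmaFiberEquiv f).symm.trans ((Equiv.sigmaCongrRight e).trans
    (Equiv.sigmaFiberEquiv g)), fun a => ?_⟩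
  exact (e (f a) ⟨a, rfl⟩).2

lemma univ_map_get (lam : Multiset ℕ+) :
    (Finset.univ : Finset (Fin lam.toList.length)).val.map lam.toList.get = lam := by
  conv_rhs => rw [← Multiset.coe_toList lam]
  rw [Fin.univ_val_map, List.ofFn_get]

lemma CL_exists (p : ℕ) (hp : p.Prime) (G : Type) [AddCommGroup G] (n : ℕ)
    (hG : Nat.card G = p ^ n) : ∃ lam : Multiset ℕ+, Nonempty (G ≃+ CLGroup p lam) := by
  have : Finite G := Nat.finite_of_card_ne_zero (by rw [hG]; exact pow_ne_zero _ hp.ne_zero)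
  obtain ⟨ι, _, d, hd, ⟨e⟩⟩ := AddCommGroup.equiv_directSum_zmod_of_finite' G
  let e' : G ≃+ (∀ i, ZMod (d i)) := e.trans (DirectSum.addEquivProd _)
  have hcard : ∏ i, d i = p ^ n := by
    rw [← hG, Nat.card_congr e'.toEquiv, Nat.card_pi]
    simp
  have h1 : ∀ i, ∃ k : ℕ+, d i = p ^ (k : ℕ) := by
    intro i
    have : d i ∣ p ^ n := by rw [← hcard]; exact Finset.dvd_prod_of_mem _ (Finset.mem_univ i)
    obtain ⟨k, -, hk⟩ := (Nat.dvd_prime_pow hp).1 this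
    have hk0 : 0 < k := by
      rcases Nat.eq_zero_or_pos k with h | h
      · subst h; have := hd i; simp at hk; omega
      · exact h
    exact ⟨⟨k, hk0⟩, hk⟩
  choose k hk using h1
  refine ⟨Finset.univ.val.map k, ?_⟩
  obtain ⟨σ, hσ⟩ := exists_equiv_of_map_eq k (Finset.univ.val.map k).toList.get
    (univ_map_get _).symm
  refine ⟨e'.trans ?_⟩
  have hdσ : ∀ i, d (σ.symm i) = p ^ (((Finset.univ.val.map k).toList.get i : ℕ+) : ℕ) := by
    intro i
    rw [hk, ← hσ, Equiv.apply_symm_apply]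
  exact {
    toFun := fun v i => ZMod.ringEquivCongr (hdσ i) (v (σ.symm i))
    invFun := fun w i => ZMod.ringEquivCongr
      (by rw [← hdσ, Equiv.symm_apply_apply] : _ = d i) (w (σ i))
    left_inv := by
      intro v
      funext i
      have : ∀ (j : ι) (h : j = i) (h1 : d j = p ^ (((Finset.univ.val.map k).toList.get (σ i) : ℕ+) : ℕ)) h2, 
         (ZMod.ringEquivCongr h2) (ZMod.ringEquivCongr h1 (v j)) = v i := by
        rintro j rfl h1 h2
        rw [← ZMod.ringEquivCongr_symm, RingEquiv.symm_apply_apply]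
        exact h1
      exact this _ (by simp) _ _
    right_inv := by
      intro v
      funext i
      have : ∀ j (h : j = i) (h1 : p ^ (((Finset.univ.val.map k).toList.get j : ℕ+) : ℕ) = d (σ.symm i)) h2, 
         (ZMod.ringEquivCongr h2) (ZMod.ringEquivCongr h1 (v j)) = v i := by
        rintro j rfl h1 h2
        rw [← ZMod.ringEquivCongr_symm, RingEquiv.symm_apply_apply]
        exact h1
      exact this _ (by simp) _ _
    map_add' := by
      intro v w
      funext i
      exact map_add (ZMod.ringEquivCongr (hdσ i)) _ _ }

lemma card_CL (p : ℕ) (lam : Multiset ℕ+) :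
    Nat.card (CLGroup p lam) = p ^ (lam.map (fun k : ℕ+ => (k : ℕ))).sum := by
  unfold CLGroup
  rw [Nat.card_pi]
  simp only [Nat.card_zmod]
  rw [Finset.prod_pow_eq_pow_sum]
  congr 1
  conv_rhs => rw [← univ_map_get lam]
  rw [Multiset.map_map]
  rfl

lemma card_tors (p : ℕ) (hp : p.Prime) (e k : ℕ) :
    Nat.card {x : ZMod (p ^ e) // p ^ k • x = 0} = p ^ min k e := by
  have : NeZero (p ^ e) := ⟨pow_ne_zero _ hp.ne_zero⟩
  have h := IsAddCyclic.card_nsmulAddMonoidHom_ker (ZMod (p ^ e)) (p ^ k)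
  rw [Nat.card_zmod] at h
  have h2 : (p ^ e).gcd (p ^ k) = p ^ min k e := by
    rcases le_total k e with hh | hh
    · rw [min_eq_left hh]; exact Nat.gcd_eq_right (pow_dvd_pow _ hh)
    · rw [min_eq_right hh]; exact Nat.gcd_eq_left (pow_dvd_pow _ hh)
  rw [← h2, ← h]
  rfl

lemma card_tors_CL (p : ℕ) (hp : p.Prime) (lam : Multiset ℕ+) (k : ℕ) :
    Nat.card {x : CLGroup p lam // p ^ k • x = 0} =
      p ^ (lam.map (fun e : ℕ+ => min k (e : ℕ))).sum := by
  have e : {x : CLGroup p lam // p ^ k • x = 0} ≃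
      (∀ i : Fin lam.toList.length, {x : ZMod (p ^ ((lam.toList.get i : ℕ+) : ℕ)) // p ^ k • x = 0}) :=
    { toFun := fun x i => ⟨x.1 i, congrFun x.2 i⟩
      invFun := fun x => ⟨fun i => (x i).1, funext fun i => (x i).2⟩
      left_inv := fun x => rfl
      right_inv := fun x => rfl }
  rw [Nat.card_congr e, Nat.card_pi]
  simp only [card_tors p hp]
  rw [Finset.prod_pow_eq_pow_sum]
  congr 1
  conv_rhs => rw [← univ_map_get lam]
  rw [Multiset.map_map]
  rfl

lemma sum_min_step [DecidableEq ℕ+] (lam : Multiset ℕ+) (k : ℕ) :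
    (lam.map (fun e : ℕ+ => min k (e : ℕ))).sum + lam.count k.succPNat 
      + (lam.map (fun e : ℕ+ => min (k + 2) (e : ℕ))).sum
    = 2 * (lam.map (fun e : ℕ+ => min (k + 1) (e : ℕ))).sum := by
  induction lam using Multiset.induction with
  | empty => simp
  | cons a s ih =>
    simp only [Multiset.map_cons, Multiset.sum_cons, Multiset.count_cons]
    have : min k (a : ℕ) + (if k.succPNat = a then 1 else 0) + min (k + 2) (a : ℕ)
        = 2 * min (k + 1) (a : ℕ) := by
      split_ifs with h
      · subst h; simp only [Nat.succPNat_coe]; omega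
      · have : (a : ℕ) ≠ k + 1 := fun hh => h (PNat.eq (by simpa using hh.symm))
        omega
    omega

lemma CL_unique (p : ℕ) (hp : p.Prime) (lam mu : Multiset ℕ+)
    (e : CLGroup p lam ≃+ CLGroup p mu) : lam = mu := by
  have h : ∀ k, (lam.map (fun e : ℕ+ => min k (e : ℕ))).sum =
      (mu.map (fun e : ℕ+ => min k (e : ℕ))).sum := by
    intro k
    apply Nat.pow_right_injective hp.two_le
    show p ^ _ = p ^ _
    rw [← card_tors_CL p hp, ← card_tors_CL p hp]
    refine Nat.card_congr (e.toEquiv.subtypeEquiv fun x => ?_)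
    show _ ↔ p ^ k • e x = 0
    rw [← map_nsmul, e.map_eq_zero_iff]
  let inst : DecidableEq ℕ+ := Classical.decEq _
  refine Multiset.ext.2 fun c => ?_
  obtain ⟨k, rfl⟩ : ∃ k : ℕ, c = k.succPNat := ⟨c.natPred, PNat.eq (by simp)⟩
  have h1 := sum_min_step lam k
  have h2 := sum_min_step mu k
  rw [h, h, h] at h1
  omega

lemma finite_hom (n : ℕ) (G : Type) [AddCommGroup G] [Finite G] : 
    Function.Injective (fun (f : (Fin n → ℤ) →+ G) (i : Fin n) => f (Pi.single i 1)) := by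
  intro f g h
  refine AddMonoidHom.functions_ext _ _ _ fun i x => ?_
  have : (Pi.single i x : Fin n → ℤ) = x • Pi.single i 1 := by
    rw [← Pi.single_smul]; simp
  rw [this, map_zsmul, map_zsmul]
  congr 1
  exact congrFun h i

lemma numSur_le (n : ℕ) (G : Type) [AddCommGroup G] [Finite G] :
    numSur (Fin n → ℤ) G ≤ Nat.card G ^ n := by
  have h := Nat.card_le_card_of_injective
    (fun f : {f : (Fin n → ℤ) →+ G // Function.Surjective f} => fun i => f.1 (Pi.single i 1))
    ((finite_hom n G).comp Subtype.val_injective)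
  simpa [numSur, Nat.card_fun] using h

lemma le_numSur (n : ℕ) (G : Type) [AddCommGroup G] [Finite G] :
    (Nat.card G : ℝ) ^ n ≤ numSur (Fin n → ℤ) G
      + Nat.card {H : AddSubgroup G // H ≠ ⊤} * ((Nat.card G : ℝ) / 2) ^ n := by
  have hfin : Finite ((Fin n → ℤ) →+ G) := Finite.of_injective _ (finite_hom n G)
  have : Fintype {H : AddSubgroup G // H ≠ ⊤} := Fintype.ofFinite _
  let F : {f : (Fin n → ℤ) →+ G // Function.Surjective f} ⊕
      (Σ H : {H : AddSubgroup G // H ≠ ⊤}, (Fin n → H.1)) → (Fin n → G) :=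
    Sum.elim (fun f i => f.1 (Pi.single i 1)) (fun x i => (x.2 i : G))
  have hF : Function.Surjective F := by
    intro v
    let f : (Fin n → ℤ) →+ G := (Fintype.linearCombination ℤ v).toAddMonoidHom
    have hf : ∀ i, f (Pi.single i 1) = v i := by
      intro i
      simp [f, Fintype.linearCombination_apply_single]
    by_cases hs : Function.Surjective f
    · exact ⟨Sum.inl ⟨f, hs⟩, funext hf⟩
    · refine ⟨Sum.inr ⟨⟨f.range, fun h => hs (AddMonoidHom.range_eq_top.1 h)⟩,
        fun i => ⟨v i, ⟨_, hf i⟩⟩⟩, rfl⟩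
  have h := Nat.card_le_card_of_surjective F hF
  rw [Nat.card_sum, Nat.card_sigma] at h
  simp only [Nat.card_fun, Nat.card_eq_fintype_card (α := Fin n), Fintype.card_fin] at h
  have h' : (Nat.card G : ℝ) ^ n ≤ numSur (Fin n → ℤ) G +
      ∑ H : {H : AddSubgroup G // H ≠ ⊤}, (Nat.card H.1 : ℝ) ^ n := by exact_mod_cast h
  refine h'.trans (by
    gcongr
    rw [Nat.card_eq_fintype_card, ← nsmul_eq_mul, ← Finset.card_univ]
    refine Finset.sum_le_card_nsmul _ _ _ fun H _ => ?_
    gcongr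
    have h1 : H.1.index ≠ 1 := fun h => H.2 (AddSubgroup.index_eq_one.1 h)
    have h0 : H.1.index ≠ 0 := AddSubgroup.index_ne_zero_of_finite
    have h2 : 2 ≤ H.1.index := by omega
    have h3 := H.1.card_mul_index
    rw [le_div_iff₀ (by norm_num)]
    rw [← h3]
    exact_mod_cast Nat.mul_le_mul_left _ h2)

lemma tendsto_ratio (G : Type) [AddCommGroup G] [Finite G] :
    Filter.Tendsto (fun n => (numSur (Fin n → ℤ) G : ℝ) / (Nat.card G : ℝ) ^ n) Filter.atTop
      (nhds 1) := by
  have hG : (0 : ℝ) < Nat.card G := by exact_mod_cast Nat.card_pos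
  have hlow : Filter.Tendsto (fun n : ℕ => 1 - (Nat.card {H : AddSubgroup G // H ≠ ⊤} : ℝ)
      * (1 / 2 : ℝ) ^ n) Filter.atTop (nhds 1) := by
    have := (tendsto_pow_atTop_nhds_zero_of_lt_one (r := (1 / 2 : ℝ)) (by norm_num)
      (by norm_num)).const_mul (Nat.card {H : AddSubgroup G // H ≠ ⊤} : ℝ)
    simpa using this.const_sub 1
  refine tendsto_of_tendsto_of_tendsto_of_le_of_le hlow tendsto_const_nhds (fun n => ?_)
    (fun n => ?_)
  · have := le_numSur n G
    show _ ≤ (numSur (Fin n → ℤ) G : ℝ) / (Nat.card G : ℝ) ^ n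
    rw [le_div_iff₀ (by positivity), sub_mul, one_mul, mul_assoc, ← mul_pow]
    rw [show (1 / 2 : ℝ) * Nat.card G = (Nat.card G : ℝ) / 2 by ring]
    linarith
  · show (numSur (Fin n → ℤ) G : ℝ) / (Nat.card G : ℝ) ^ n ≤ 1
    rw [div_le_one (by positivity)]
    exact_mod_cast numSur_le n G

/-- surjections from quotients -/
noncomputable def surMap (M G : Type) [AddCommGroup M] [AddCommGroup G] :
    (Σ L : {L : AddSubgroup M // Nonempty (M ⧸ L ≃+ G)}, (M ⧸ L.1 ≃+ G)) →
      {f : M →+ G // Function.Surjective f} := fun x =>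
  ⟨(x.2 : M ⧸ x.1.1 →+ G).comp (QuotientAddGroup.mk' x.1.1),
    x.2.surjective.comp (QuotientAddGroup.mk'_surjective _)⟩

lemma surMap_bij (M G : Type) [AddCommGroup M] [AddCommGroup G] :
    Function.Bijective (surMap M G) := by
  constructor
  · rintro ⟨⟨L, hL⟩, e⟩ ⟨⟨L', hL'⟩, e'⟩ h
    have h0 : (e : M ⧸ L →+ G).comp (QuotientAddGroup.mk' L) =
      (e' : M ⧸ L' →+ G).comp (QuotientAddGroup.mk' L') := congrArg Subtype.val h
    have hLL : L = L' := by
      ext x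
      have := DFunLike.congr_fun h0 x
      simp only [AddMonoidHom.comp_apply, QuotientAddGroup.mk'_apply, AddMonoidHom.coe_coe] at this
      rw [← QuotientAddGroup.eq_zero_iff, ← QuotientAddGroup.eq_zero_iff, ← e.map_eq_zero_iff,
        this, e'.map_eq_zero_iff]
    subst hLL
    congr 1
    ext q
    obtain ⟨x, rfl⟩ := QuotientAddGroup.mk'_surjective L q
    exact DFunLike.congr_fun h0 x
  · rintro ⟨f, hf⟩
    let e := QuotientAddGroup.quotientKerEquivOfSurjective f hf
    refine ⟨⟨⟨f.ker, ⟨e⟩⟩, e⟩, ?_⟩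
    apply Subtype.ext
    ext x
    rfl

lemma card_sub_mul (M G : Type) [AddCommGroup M] [AddCommGroup G] [Finite G]
    [Finite (M →+ G)] : Finite {L : AddSubgroup M // Nonempty (M ⧸ L ≃+ G)} ∧
    Nat.card {L : AddSubgroup M // Nonempty (M ⧸ L ≃+ G)} * numAut G = numSur M G := by
  have hfin : Finite (Σ L : {L : AddSubgroup M // Nonempty (M ⧸ L ≃+ G)}, (M ⧸ L.1 ≃+ G)) :=
    Finite.of_injective _ (surMap_bij M G).1
  have h1 : Finite {L : AddSubgroup M // Nonempty (M ⧸ L ≃+ G)} :=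
    Finite.of_surjective (fun x : (Σ L : {L : AddSubgroup M // Nonempty (M ⧸ L ≃+ G)},
      (M ⧸ L.1 ≃+ G)) => x.1) (fun L => ⟨⟨L, L.2.some⟩, rfl⟩)
  refine ⟨h1, ?_⟩
  let e2 : (Σ L : {L : AddSubgroup M // Nonempty (M ⧸ L ≃+ G)}, (M ⧸ L.1 ≃+ G)) ≃
      {L : AddSubgroup M // Nonempty (M ⧸ L ≃+ G)} × (G ≃+ G) :=
    (Equiv.sigmaCongrRight fun L =>
      { toFun := fun e => L.2.some.symm.trans e
        invFun := fun a => L.2.some.trans a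
        left_inv := fun e => by ext; simp
        right_inv := fun e => by ext; simp }).trans (Equiv.sigmaEquivProd _ _)
  rw [numSur, ← Nat.card_congr (Equiv.ofBijective _ (surMap_bij M G)), Nat.card_congr e2,
    Nat.card_prod, numAut]

lemma finite_CL (p : ℕ) (hp : p.Prime) (lam : Multiset ℕ+) : Finite (CLGroup p lam) :=
  Nat.finite_of_card_ne_zero (by rw [card_CL]; exact pow_ne_zero _ hp.ne_zero)

lemma numAut_ne_zero (G : Type) [AddCommGroup G] [Finite G] : numAut G ≠ 0 := by
  have : Finite (G ≃+ G) := Finite.of_injective (fun e : G ≃+ G => (e : G → G))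
    DFunLike.coe_injective
  have : Nonempty (G ≃+ G) := ⟨AddEquiv.refl _⟩
  exact Nat.card_pos.ne'

lemma latZ_eq_tsum (p : ℕ) (hp : p.Prime) (n t : ℕ) :
    latZ p (Fin n → ℤ) t = ∑' lam : Multiset ℕ+,
      (numSur (Fin n → ℤ) (CLGroup p lam) : ℝ≥0∞) * (numAut (CLGroup p lam) : ℝ≥0∞)⁻¹ *
        ((Nat.card (CLGroup p lam) : ℝ≥0∞) ^ t)⁻¹ := by
  let M := Fin n → ℤ
  have hind : ∀ (lam : Multiset ℕ+) (L : AddSubgroup M), Nonempty (M ⧸ L ≃+ CLGroup p lam) →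
      L.index = Nat.card (CLGroup p lam) := fun lam L ⟨e⟩ => Nat.card_congr e.toEquiv
  let F : (Σ lam : Multiset ℕ+, {L : AddSubgroup M // Nonempty (M ⧸ L ≃+ CLGroup p lam)}) →
      PSub p M := fun x => ⟨x.2.1, _, (hind x.1 x.2.1 x.2.2).trans (card_CL p x.1)⟩
  have hF : Function.Bijective F := by
    constructor
    · rintro ⟨lam, L, ⟨e⟩⟩ ⟨lam', L', ⟨e'⟩⟩ h
      have hLL : L = L' := congrArg Subtype.val h
      subst hLL
      have := CL_unique p hp _ _ (e.symm.trans e')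
      subst this
      rfl
    · rintro ⟨L, j, hj⟩
      obtain ⟨lam, he⟩ := CL_exists p hp (M ⧸ L) j hj
      exact ⟨⟨lam, L, he⟩, rfl⟩
  rw [latZ, ← (Equiv.ofBijective F hF).tsum_eq, ENNReal.tsum_sigma']
  refine tsum_congr fun lam => ?_
  have := finite_CL p hp lam
  have hfin : Finite (M →+ CLGroup p lam) := Finite.of_injective _ (finite_hom n _)
  obtain ⟨hfin2, hc⟩ := card_sub_mul M (CLGroup p lam)
  have h1 : ∀ L : {L : AddSubgroup M // Nonempty (M ⧸ L ≃+ CLGroup p lam)},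
      ((((Equiv.ofBijective F hF) ⟨lam, L⟩).1.index : ℝ≥0∞) ^ t)⁻¹ =
        ((Nat.card (CLGroup p lam) : ℝ≥0∞) ^ t)⁻¹ := by
    intro L
    simp only [Equiv.ofBijective_apply, F]
    rw [hind lam L.1 L.2]
  simp only [h1]
  rw [ENNReal.tsum_const, ENat.card_eq_coe_natCard, ← hc]
  have h0 : (numAut (CLGroup p lam) : ℝ≥0∞) ≠ 0 := by exact_mod_cast numAut_ne_zero _
  push_cast
  rw [mul_assoc (Nat.card _ : ℝ≥0∞), ENNReal.mul_inv_cancel h0 (by finiteness), mul_one]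


lemma clfactor (p : ℕ) (hp : p.Prime) (u : ℕ) :
    Summable (fun k : ℕ => ‖-(p : ℝ) ^ (-((k : ℤ) + 1 + u))‖) ∧
    ∀ k : ℕ, (p : ℝ) ^ (-((k : ℤ) + 1 + u)) = ((p : ℝ)⁻¹) ^ (k + 1 + u) := by
  have h : ∀ k : ℕ, (p : ℝ) ^ (-((k : ℤ) + 1 + u)) = ((p : ℝ)⁻¹) ^ (k + 1 + u) := by
    intro k
    rw [zpow_neg, inv_pow]
    rw [← zpow_natCast]
    push_cast
    rfl
  refine ⟨?_, h⟩
  simp only [h, norm_neg, norm_pow, norm_inv, Real.norm_natCast]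
  have hp1 : (1 : ℝ) < p := by exact_mod_cast hp.one_lt
  have := (summable_geometric_of_lt_one (r := (p : ℝ)⁻¹) (by positivity)
    (inv_lt_one_of_one_lt₀ hp1)).mul_right ((p : ℝ)⁻¹ ^ (1 + u))
  refine this.congr fun k => ?_
  rw [← pow_add, add_assoc]

lemma factor_pos (p : ℕ) (hp : p.Prime) (k : ℕ) : 0 < 1 - ((p : ℝ)⁻¹) ^ (k + 1) := by
  have hp1 : (1 : ℝ) < p := by exact_mod_cast hp.one_lt
  have := pow_lt_one₀ (a := (p : ℝ)⁻¹) (by positivity) (inv_lt_one_of_one_lt₀ hp1) k.succ_ne_zero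
  exact sub_pos.2 this

lemma clProd_ne_zero (p : ℕ) (hp : p.Prime) (u : ℕ) : clProd p u ≠ 0 := by
  obtain ⟨h1, h2⟩ := clfactor p hp u
  have := tprod_one_add_ne_zero_of_summable (f := fun k : ℕ => -(p : ℝ) ^ (-((k : ℤ) + 1 + u)))
    (fun k => by
      rw [h2, ← sub_eq_add_neg, add_right_comm]
      exact (factor_pos p hp _).ne') h1
  simpa only [clProd, sub_eq_add_neg] using this

lemma clProd_tendsto (p : ℕ) (hp : p.Prime) :
    Filter.Tendsto (fun n => ∏ k ∈ Finset.range n, (1 - ((p : ℝ)⁻¹) ^ (k + 2))) Filter.atTop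
      (nhds (clProd p 1)) := by
  obtain ⟨h1, h2⟩ := clfactor p hp 1
  have := (multipliable_one_add_of_summable h1).hasProd.tendsto_prod_nat
  simp only [h2, ← sub_eq_add_neg] at this
  simp only [add_assoc] at this
  have h3 : clProd p 1 = ∏' k : ℕ, (1 - ((p : ℝ)⁻¹) ^ (k + (1 + 1))) := by
    simp only [clProd, h2]

  rw [h3]
  exact this

lemma latZ_ofReal (p : ℕ) (hp : p.Prime) (n : ℕ) :
    latZ p (Fin n → ℤ) (n + 1) =
      ENNReal.ofReal (∏ k ∈ Finset.range n, (1 - ((p : ℝ)⁻¹) ^ (k + 2)))⁻¹ := by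
  have hp0 : (0 : ℝ) < p := by exact_mod_cast hp.pos
  rw [latZ_eq p hp, ← Finset.prod_inv_distrib, ENNReal.ofReal_prod_of_nonneg
    (fun k _ => (inv_pos.2 (factor_pos p hp (k + 1))).le)]
  refine Finset.prod_congr rfl fun k _ => ?_
  rw [ENNReal.ofReal_inv_of_pos (factor_pos p hp (k + 1)), ENNReal.ofReal_sub _ (by positivity),
    ENNReal.ofReal_pow (by positivity), ENNReal.ofReal_inv_of_pos hp0]
  simp

lemma sum_eq_enn (p : ℕ) (hp : p.Prime) :
    ∑' lam : Multiset ℕ+, (numAut (CLGroup p lam) : ℝ≥0∞)⁻¹ *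
        (Nat.card (CLGroup p lam) : ℝ≥0∞)⁻¹ = ENNReal.ofReal (clProd p 1)⁻¹ := by
  have hZ : Filter.Tendsto (fun n => latZ p (Fin n → ℤ) (n + 1)) Filter.atTop
      (nhds (ENNReal.ofReal (clProd p 1)⁻¹)) := by
    simp only [latZ_ofReal p hp]
    exact ENNReal.tendsto_ofReal ((clProd_tendsto p hp).inv₀ (clProd_ne_zero p hp 1))
  have hterm : ∀ n, latZ p (Fin n → ℤ) (n + 1) = ∑' lam : Multiset ℕ+,
      ENNReal.ofReal ((numSur (Fin n → ℤ) (CLGroup p lam) : ℝ) / (Nat.card (CLGroup p lam) : ℝ) ^ n)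
      * ((numAut (CLGroup p lam) : ℝ≥0∞)⁻¹ * (Nat.card (CLGroup p lam) : ℝ≥0∞)⁻¹) := by
    intro n
    rw [latZ_eq_tsum p hp]
    refine tsum_congr fun lam => ?_
    have := finite_CL p hp lam
    have hG : (0 : ℝ) < Nat.card (CLGroup p lam) := by exact_mod_cast Nat.card_pos
    have hG0 : (Nat.card (CLGroup p lam) : ℝ≥0∞) ≠ 0 := by exact_mod_cast Nat.card_pos.ne'
    rw [ENNReal.ofReal_div_of_pos (by positivity), ENNReal.ofReal_pow hG.le, ENNReal.ofReal_natCast,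
      ENNReal.ofReal_natCast, pow_succ, ENNReal.mul_inv (Or.inr (by finiteness)) (Or.inr hG0),
      div_eq_mul_inv]
    ring
  have hlim : ∀ lam : Multiset ℕ+, Filter.Tendsto (fun n =>
      ENNReal.ofReal ((numSur (Fin n → ℤ) (CLGroup p lam) : ℝ) / (Nat.card (CLGroup p lam) : ℝ) ^ n)
      * ((numAut (CLGroup p lam) : ℝ≥0∞)⁻¹ * (Nat.card (CLGroup p lam) : ℝ≥0∞)⁻¹)) Filter.atTop
      (nhds ((numAut (CLGroup p lam) : ℝ≥0∞)⁻¹ * (Nat.card (CLGroup p lam) : ℝ≥0∞)⁻¹)) := by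
    intro lam
    have := finite_CL p hp lam
    have h := ENNReal.tendsto_ofReal (tendsto_ratio (CLGroup p lam))
    have h2 := ENNReal.Tendsto.mul_const
      (b := (numAut (CLGroup p lam) : ℝ≥0∞)⁻¹ * (Nat.card (CLGroup p lam) : ℝ≥0∞)⁻¹) h
      (Or.inl (by simp))
    simpa using h2
  apply le_antisymm
  · rw [ENNReal.tsum_eq_iSup_sum]
    refine iSup_le fun s => ?_
    refine le_of_tendsto_of_tendsto' (tendsto_finsetSum s fun lam _ => hlim lam) hZ fun n => ?_
    rw [hterm]
    exact ENNReal.sum_le_tsum s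
  · refine le_of_tendsto' hZ fun n => ?_
    rw [hterm]
    refine ENNReal.tsum_le_tsum fun lam => ?_
    have := finite_CL p hp lam
    have hG : (0 : ℝ) < Nat.card (CLGroup p lam) := by exact_mod_cast Nat.card_pos
    refine mul_le_of_le_one_left zero_le (ENNReal.ofReal_le_one.2 ?_)
    rw [div_le_one (by positivity)]
    exact_mod_cast numSur_le n (CLGroup p lam)

lemma sum_eq_real (p : ℕ) (hp : p.Prime) :
    ∑' lam : Multiset ℕ+, (numAut (CLGroup p lam) : ℝ)⁻¹ *
        (Nat.card (CLGroup p lam) : ℝ)⁻¹ = (clProd p 1)⁻¹ := by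
  have h := congrArg ENNReal.toReal (sum_eq_enn p hp)
  have hpos : 0 ≤ clProd p 1 := ge_of_tendsto' (clProd_tendsto p hp) fun n =>
    Finset.prod_nonneg fun k _ => (factor_pos p hp (k + 1)).le
  rw [ENNReal.toReal_ofReal (inv_nonneg.2 hpos), ENNReal.tsum_toReal_eq] at h
  · rw [← h]
    refine tsum_congr fun lam => ?_
    simp [ENNReal.toReal_mul, ENNReal.toReal_inv]
  · intro lam
    have := finite_CL p hp lam
    have h0 : (numAut (CLGroup p lam) : ℝ≥0∞) ≠ 0 := by exact_mod_cast numAut_ne_zero _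
    have hG0 : (Nat.card (CLGroup p lam) : ℝ≥0∞) ≠ 0 := by exact_mod_cast Nat.card_pos.ne'
    exact ENNReal.mul_ne_top (ENNReal.inv_ne_top.2 h0) (ENNReal.inv_ne_top.2 hG0)

/-- Conditioning the pointed Cohen–Lenstra measure on the marked element being the identity
yields `μ^1`: for every finite abelian `p`-group `A`,
`(μ^0(A)/|A|) / (∑_B μ^0(B)/|B|) = μ^1(A)`. -/
theorem cl_conditioned_measure (p : ℕ) (hp : p.Prime) (hodd : Odd p)
    (A : Type) [AddCommGroup A] (hA : ∃ n : ℕ, Nat.card A = p ^ n) :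
    (clMeasure p 0 A / (Nat.card A : ℝ)) /
      (∑' lam : Multiset ℕ+, clMeasure p 0 (CLGroup p lam) / (Nat.card (CLGroup p lam) : ℝ))
      = clMeasure p 1 A := by
  have hs : (∑' lam : Multiset ℕ+, clMeasure p 0 (CLGroup p lam) / (Nat.card (CLGroup p lam) : ℝ))
      = clProd p 0 * (clProd p 1)⁻¹ := by
    rw [← sum_eq_real p hp, ← tsum_mul_left]
    refine tsum_congr fun lam => ?_
    simp only [clMeasure, pow_zero, inv_one, one_mul, div_eq_mul_inv]
    ring
  rw [hs]
  have h0 := clProd_ne_zero p hp 0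
  have h1 := clProd_ne_zero p hp 1
  simp only [clMeasure, pow_zero, inv_one, one_mul, pow_one, div_eq_mul_inv, mul_inv, inv_inv]
  calc _ = (Nat.card A : ℝ)⁻¹ * (numAut A : ℝ)⁻¹ * clProd p 1 * (clProd p 0 * (clProd p 0)⁻¹) := by
        ring
    _ = _ := by rw [mul_inv_cancel₀ h0, mul_one]
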